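/- arXiv:1602.03537 — 9 statements merged into one kernel-verified Lean document; each statement's English description precedes it below -/
import Mathlib

section
/- Let G be a finite group possessing at least one proper non-trivial subgroup, and let N_G denote the subgroup of G generated by all minimal subgroups of G. The following are equivalent: (i) Γ(G) has a dominating set of cardinality 1, i.e. there is a proper non-trivial subgroup of G intersecting every non-trivial subgroup of G non-trivially; (ii) N_G is a proper subgroup of G; (iii) N_G is a proper normal subgroup of G that has no complement in G (i.e. there is no subgroup H of G with H ∩ N_G = 1 and N_G H = G and H non-trivial... equivalently, the extension of N_G by G/N_G does not split). -/
/-- `D` is a dominating set of the intersection graph `Γ(G)` of the group `G`: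
every member of `D` is a proper non-trivial subgroup of `G`, and every proper
non-trivial subgroup of `G` either belongs to `D` or intersects some member of
`D` non-trivially. -/
def IsDomSet {G : Type*} [Group G] (D : Set (Subgroup G)) : Prop :=
  (∀ H ∈ D, H ≠ ⊥ ∧ H ≠ ⊤) ∧
    ∀ K : Subgroup G, K ≠ ⊥ → K ≠ ⊤ →
      K ∈ D ∨ ∃ W ∈ D, W ≠ K ∧ K ⊓ W ≠ ⊥

/-- The domination number `γ(G)`: the smallest cardinality of a dominating set
of the intersection graph `Γ(G)`. -/
noncomputable def domNumber (G : Type*) [Group G] : ℕ :=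
  sInf {n : ℕ | ∃ D : Set (Subgroup G), IsDomSet D ∧ D.ncard = n}

/-!
Call a subgroup essential if it meets every non-trivial subgroup non-trivially. An essential
subgroup contains every minimal subgroup. Conversely, when every non-trivial subgroup contains a
minimal one, a subgroup containing all minimal subgroups is essential. Hence the essential
subgroups are exactly those above `N_G`, and a proper one exists if and only if `N_G` is proper.
Since `N_G` is itself essential, no non-trivial subgroup meets it trivially, so it has no
non-trivial complement.
-/

section Lattice

variable {α β : Type*}

/-- An essential element of a meet-semilattice with bottom, as for essential submodules: one whose
meet with every non-bottom element is non-bottom. In the lattice of subgroups, these are the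
subgroups meeting every non-trivial subgroup non-trivially. -/
def IsEssential [SemilatticeInf α] [OrderBot α] (a : α) : Prop :=
  ∀ b : α, b ≠ ⊥ → a ⊓ b ≠ ⊥

theorem IsEssential.le_of_isAtom [SemilatticeInf α] [OrderBot α] {a b : α} (ha : IsEssential a)
    (hb : IsAtom b) : b ≤ a :=
  hb.not_disjoint_iff_le.mp fun hba => ha b hb.ne_bot hba.symm.eq_bot

theorem IsEssential.ne_bot [SemilatticeInf α] [OrderBot α] [Nontrivial α] {a : α}
    (ha : IsEssential a) : a ≠ ⊥ := by
  obtain ⟨b, hb⟩ := exists_ne (⊥ : α)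
  exact ne_bot_of_le_ne_bot (ha b hb) inf_le_left

theorem isEssential_iff_forall_isAtom_le [SemilatticeInf α] [OrderBot α] [IsAtomic α] {a : α} :
    IsEssential a ↔ ∀ b : α, IsAtom b → b ≤ a := by
  refine ⟨fun ha _ => ha.le_of_isAtom, fun ha c hc => ?_⟩
  obtain ⟨b, hb, hbc⟩ := (eq_bot_or_exists_atom_le c).resolve_left hc
  exact ne_bot_of_le_ne_bot hb.ne_bot (le_inf (ha b hb) hbc)

/-- The socle of a complete lattice: the supremum of its atoms. In the lattice of subgroups of `G`
it is the subgroup `N_G` generated by all minimal subgroups (not the group-theoretic socle, which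
is generated by the minimal normal subgroups). -/
def latticeSocle (α : Type*) [CompleteLattice α] : α :=
  ⨆ (a : α) (_ : IsAtom a), a

theorem latticeSocle_le_iff [CompleteLattice α] {a : α} :
    latticeSocle α ≤ a ↔ ∀ b : α, IsAtom b → b ≤ a :=
  iSup₂_le_iff

theorem isEssential_iff_latticeSocle_le [CompleteLattice α] [IsAtomic α] {a : α} :
    IsEssential a ↔ latticeSocle α ≤ a :=
  isEssential_iff_forall_isAtom_le.trans latticeSocle_le_iff.symm

theorem isEssential_latticeSocle [CompleteLattice α] [IsAtomic α] :
    IsEssential (latticeSocle α) :=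
  isEssential_iff_latticeSocle_le.mpr le_rfl

theorem exists_isEssential_ne_bot_ne_top_iff [CompleteLattice α] [IsAtomic α] :
    (∃ a : α, a ≠ ⊥ ∧ a ≠ ⊤ ∧ IsEssential a) ↔ latticeSocle α ≠ ⊤ := by
  constructor
  · rintro ⟨a, -, ha_top, ha⟩
    exact ne_top_of_le_ne_top ha_top (isEssential_iff_latticeSocle_le.mp ha)
  · intro hsocle
    have : Nontrivial α := nontrivial_of_ne _ _ hsocle
    exact ⟨latticeSocle α, isEssential_latticeSocle.ne_bot, hsocle, isEssential_latticeSocle⟩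

theorem map_latticeSocle [CompleteLattice α] [CompleteLattice β] (e : α ≃o β) :
    e (latticeSocle α) = latticeSocle β := by
  refine eq_of_forall_ge_iff fun b => ?_
  simp only [← e.le_symm_apply, latticeSocle_le_iff, e.surjective.forall, e.isAtom_iff]

end Lattice

section Subgroup

variable {G : Type*} [Group G]

instance latticeSocle_characteristic : (latticeSocle (Subgroup G)).Characteristic :=
  Subgroup.characteristic_iff_map_eq.mpr fun φ => map_latticeSocle φ.mapSubgroup

theorem domNumber_eq_one_tfae_general [IsAtomic (Subgroup G)]
    (N : Subgroup G) (hN : N = ⨆ (A : Subgroup G) (_ : IsAtom A), A) :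
    ((∃ H : Subgroup G, H ≠ ⊥ ∧ H ≠ ⊤ ∧ ∀ K : Subgroup G, K ≠ ⊥ → H ⊓ K ≠ ⊥) ↔
      N ≠ ⊤) ∧
    (N ≠ ⊤ ↔
      (N ≠ ⊤ ∧ N.Normal ∧
        ¬∃ H : Subgroup G, H ≠ ⊥ ∧ H ⊓ N = ⊥ ∧ N ⊔ H = ⊤)) := by
  obtain rfl : N = latticeSocle (Subgroup G) := hN
  refine ⟨exists_isEssential_ne_bot_ne_top_iff,
    fun hsocle => ⟨hsocle, inferInstance, ?_⟩, And.left⟩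
  rintro ⟨H, hH, hinf, -⟩
  exact isEssential_latticeSocle H hH (inf_comm _ _ |>.trans hinf)

end Subgroup

/-- For a finite group `G` with at least one proper non-trivial subgroup, with
`N` the subgroup generated by all minimal subgroups of `G`, the following are
equivalent: (i) `Γ(G)` has a dominating set of cardinality one, i.e. there is a
proper non-trivial subgroup intersecting every non-trivial subgroup non-trivially;
(ii) `N` is a proper subgroup; (iii) `N` is a proper normal subgroup having no
non-trivial complement in `G`. -/
theorem domNumber_eq_one_tfae {G : Type*} [Group G] [Finite G]
    (hG : ∃ K : Subgroup G, K ≠ ⊥ ∧ K ≠ ⊤)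
    (N : Subgroup G) (hN : N = ⨆ (A : Subgroup G) (_ : IsAtom A), A) :
    ((∃ H : Subgroup G, H ≠ ⊥ ∧ H ≠ ⊤ ∧ ∀ K : Subgroup G, K ≠ ⊥ → H ⊓ K ≠ ⊥) ↔
      N ≠ ⊤) ∧
    (N ≠ ⊤ ↔
      (N ≠ ⊤ ∧ N.Normal ∧
        ¬∃ H : Subgroup G, H ≠ ⊥ ∧ H ⊓ N = ⊥ ∧ N ⊔ H = ⊤)) :=
  domNumber_eq_one_tfae_general N hN
end

section
/- If G is a finite simple group, then the intersection graph Γ(G) has no dominating set of cardinality 1; that is, there is no proper non-trivial subgroup H of G such that H intersects every proper non-trivial subgroup of G non-trivially. -/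
/-!
A subgroup of prime order has no proper non-trivial subgroups, so a subgroup `H` that meets every
non-trivial subgroup contains every element of prime order. The set of these elements is closed
under conjugation, so they even lie in the normal core of `H`. If there is one, the normal core is
non-trivial, and in a simple group this forces `H = ⊤`.
-/

theorem exists_prime_orderOf_of_isOfFinOrder {M : Type*} [Monoid M] {x : M}
    (hx : IsOfFinOrder x) (hx1 : x ≠ 1) : ∃ y : M, (orderOf y).Prime := by
  obtain ⟨p, hp, hdvd⟩ := Nat.exists_prime_and_dvd (orderOf_eq_one_iff.not.mpr hx1)
  refine ⟨x ^ (orderOf x / p), ?_⟩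
  rwa [orderOf_pow_orderOf_div hx.orderOf_pos.ne' hdvd]

section

variable {G : Type*} [Group G]

theorem isAtom_of_prime_natCard {K : Subgroup G} (hK : (Nat.card K).Prime) : IsAtom K := by
  have : Finite K := Nat.finite_of_card_ne_zero hK.ne_zero
  refine ⟨fun h => hK.ne_one (Subgroup.card_eq_one.mpr h), fun L hL => ?_⟩
  obtain hcard | hcard := (Nat.dvd_prime hK).mp (Subgroup.card_dvd_of_le hL.le)
  · exact Subgroup.card_eq_one.mp hcard
  · exact absurd (Subgroup.eq_of_le_of_card_ge hL.le hcard.ge) hL.ne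

theorem mem_of_inf_zpowers_ne_bot {H : Subgroup G} {x : G} (hx : (orderOf x).Prime)
    (hHx : H ⊓ Subgroup.zpowers x ≠ ⊥) : x ∈ H := by
  have hatom : IsAtom (Subgroup.zpowers x) :=
    isAtom_of_prime_natCard (by rwa [Nat.card_zpowers])
  rw [← Subgroup.zpowers_le, ← hatom.not_disjoint_iff_le, disjoint_comm, disjoint_iff]
  exact hHx

theorem normalCore_ne_bot_of_forall_inf_ne_bot {H : Subgroup G}
    (hH : ∀ K : Subgroup G, K ≠ ⊥ → H ⊓ K ≠ ⊥) {x : G} (hx : IsOfFinOrder x) (hx1 : x ≠ 1) :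
    H.normalCore ≠ ⊥ := by
  have hmem : ∀ y : G, (orderOf y).Prime → y ∈ H := fun y hy =>
    mem_of_inf_zpowers_ne_bot hy <| hH _ <| Subgroup.zpowers_ne_bot.mpr fun hy1 =>
      hy.ne_one (orderOf_eq_one_iff.mpr hy1)
  obtain ⟨y, hy⟩ := exists_prime_orderOf_of_isOfFinOrder hx hx1
  have hycore : y ∈ H.normalCore := fun g => hmem _ <| by
    rwa [← SemiconjBy.orderOf_eq g (SemiconjBy.conj_mk g y)]
  intro hbot
  rw [hbot, Subgroup.mem_bot, ← orderOf_eq_one_iff] at hycore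
  exact hy.ne_one hycore

theorem simple_group_not_dominated_by_singleton_general (hs : IsSimpleGroup G)
    {x : G} (hx : IsOfFinOrder x) (hx1 : x ≠ 1) :
    ¬∃ H : Subgroup G, H ≠ ⊥ ∧ H ≠ ⊤ ∧
      ∀ K : Subgroup G, K ≠ ⊥ → K ≠ ⊤ → H ⊓ K ≠ ⊥ := by
  rintro ⟨H, hbot, htop, hH⟩
  have hmeets : ∀ K : Subgroup G, K ≠ ⊥ → H ⊓ K ≠ ⊥ := by
    intro K hK
    obtain rfl | hKtop := eq_or_ne K ⊤
    · rwa [inf_top_eq]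
    · exact hH K hK hKtop
  have hcore : H.normalCore = ⊤ := H.normalCore_normal.eq_bot_or_eq_top.resolve_left
    (normalCore_ne_bot_of_forall_inf_ne_bot hmeets hx hx1)
  exact htop (top_le_iff.mp (hcore ▸ H.normalCore_le))

end

/-- If `G` is a finite simple group, then the intersection graph `Γ(G)` has no
dominating set of cardinality one: no proper non-trivial subgroup of `G`
intersects every proper non-trivial subgroup of `G` non-trivially. -/
theorem simple_group_not_dominated_by_singleton {G : Type*} [Group G] [Finite G]
    (hs : IsSimpleGroup G) :
    ¬∃ H : Subgroup G, H ≠ ⊥ ∧ H ≠ ⊤ ∧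
      ∀ K : Subgroup G, K ≠ ⊥ → K ≠ ⊤ → H ⊓ K ≠ ⊥ := by
  obtain ⟨x, hx1⟩ := exists_ne (1 : G)
  exact simple_group_not_dominated_by_singleton_general hs (isOfFinOrder_of_finite x) hx1
end

section
/- Let G be a finite group, let D be a dominating set of the intersection graph Γ(G), and let H be a subgroup of G that itself has at least one proper non-trivial subgroup. If no member of D contains H, then γ(H) ≤ |D|, i.e. the intersection graph Γ(H) has a dominating set of cardinality at most |D|. -/
theorem isDomSet_iff_forall_exists_inf_ne_bot {G : Type*} [Group G] {D : Set (Subgroup G)} :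
    IsDomSet D ↔ (∀ W ∈ D, W ≠ ⊥ ∧ W ≠ ⊤) ∧
      ∀ K : Subgroup G, K ≠ ⊥ → K ≠ ⊤ → ∃ W ∈ D, K ⊓ W ≠ ⊥ := by
  refine and_congr_right fun _ => forall₃_congr fun K hK_bot _ => ⟨?_, ?_⟩
  · rintro (hK | ⟨W, hW, -, hKW⟩)
    · exact ⟨K, hK, by rwa [inf_idem]⟩
    · exact ⟨W, hW, hKW⟩
  · rintro ⟨W, hW, hKW⟩
    obtain rfl | hne := eq_or_ne W K
    · exact Or.inl hW
    · exact Or.inr ⟨W, hW, hne, hKW⟩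

theorem domNumber_le_ncard {G : Type*} [Group G] {D : Set (Subgroup G)} (hD : IsDomSet D) :
    domNumber G ≤ D.ncard :=
  Nat.sInf_le ⟨D, hD, rfl⟩

section Comap

variable {G H : Type*} [Group G] [Group H] {f : H →* G} {D : Set (Subgroup G)}

theorem map_inf_eq_map_inf_comap (f : H →* G) (K : Subgroup H) (W : Subgroup G) :
    K.map f ⊓ W = (K ⊓ W.comap f).map f :=
  SetLike.coe_injective (Set.image_inter_preimage f K W).symm

theorem map_ne_top_of_injective (hf : Function.Injective f) {K : Subgroup H} (hK : K ≠ ⊤) :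
    K.map f ≠ ⊤ := fun hmap =>
  hK (by rw [← Subgroup.comap_map_eq_self_of_injective hf K, hmap, Subgroup.comap_top])

theorem IsDomSet.image_comap_sdiff_bot (hD : IsDomSet D) (hf : Function.Injective f)
    (hrange : ∀ W ∈ D, ¬f.range ≤ W) :
    IsDomSet (Subgroup.comap f '' D \ {⊥}) := by
  rw [isDomSet_iff_forall_exists_inf_ne_bot] at hD ⊢
  obtain ⟨-, hmeets⟩ := hD
  constructor
  · rintro _ ⟨⟨W, hW, rfl⟩, hW_bot⟩
    refine ⟨hW_bot, fun hW_top => hrange W hW ?_⟩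
    rw [MonoidHom.range_eq_map, Subgroup.map_le_iff_le_comap, hW_top]
  · intro K hK_bot hK_top
    have hmap_bot : K.map f ≠ ⊥ := (Subgroup.map_eq_bot_iff_of_injective K hf).not.mpr hK_bot
    obtain ⟨W, hW, hKW⟩ := hmeets (K.map f) hmap_bot (map_ne_top_of_injective hf hK_top)
    have hmeet : K ⊓ W.comap f ≠ ⊥ := by
      rwa [map_inf_eq_map_inf_comap, Ne, Subgroup.map_eq_bot_iff_of_injective _ hf] at hKW
    exact ⟨W.comap f, ⟨⟨W, hW, rfl⟩, ne_bot_of_le_ne_bot hmeet inf_le_right⟩, hmeet⟩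

theorem domNumber_subgroup_le_general (hD : IsDomSet D) (hfin : D.Finite)
    (hf : Function.Injective f) (hrange : ∀ W ∈ D, ¬f.range ≤ W) :
    domNumber H ≤ D.ncard :=
  calc domNumber H
      ≤ (Subgroup.comap f '' D \ {⊥}).ncard :=
        domNumber_le_ncard (hD.image_comap_sdiff_bot hf hrange)
    _ ≤ (Subgroup.comap f '' D).ncard := Set.ncard_le_ncard Set.sdiff_subset (hfin.image _)
    _ ≤ D.ncard := Set.ncard_image_le hfin

end Comap

/-- If `D` is a dominating set of `Γ(G)`, `H` a subgroup of the finite group `G`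
having a proper non-trivial subgroup, and no member of `D` contains `H`, then
`γ(H) ≤ |D|`. -/
theorem domNumber_subgroup_le {G : Type*} [Group G] [Finite G]
    (D : Set (Subgroup G)) (hD : IsDomSet D) (H : Subgroup G)
    (hH : ∃ K : Subgroup H, K ≠ ⊥ ∧ K ≠ ⊤)
    (hnc : ∀ W ∈ D, ¬H ≤ W) :
    domNumber H ≤ D.ncard :=
  domNumber_subgroup_le_general hD D.toFinite H.subtype_injective
    (by simpa only [H.range_subtype] using hnc)
end

section
/- Let G be a finite group and N a normal subgroup of G such that the quotient G/N has at least one proper non-trivial subgroup. If D is a dominating set of Γ(G/N), then the corresponding set {W : N < W < G and W/N ∈ D} of proper subgroups of G strictly containing N is a dominating set of Γ(G) of the same cardinality as D. In particular, γ(G) ≤ γ(G/N). -/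
/-!
Let `f : G → G/N` be the quotient map, `D` a dominating set of `Γ(G/N)` and `K ≠ 1` a subgroup of
`G`. If `f(K) = 1`, then `K ≤ N`, so `K` lies in the preimage of every member of `D`. Otherwise
`f(K)` meets some `V ∈ D` non-trivially, and so `K` meets `f⁻¹(V)` non-trivially, because
`f(K ∩ f⁻¹(V)) = f(K) ∩ V`. Taking preimages is injective on subgroups, which gives the cardinality.
-/

/-- The domination number of `Γ(G)` for an arbitrary group `G`, with value `⊤` if every dominating
set is infinite. For infinite `G` this is the meaningful invariant, since `domNumber` counts an
infinite dominating set as having `0` elements. -/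
noncomputable def eDomNumber (G : Type*) [Group G] : ℕ∞ :=
  ⨅ D : {D : Set (Subgroup G) // IsDomSet D}, D.1.encard

section DominatingSets

variable {G : Type*} [Group G] {D : Set (Subgroup G)}

theorem isDomSet_iff_exists_inf_ne_bot :
    IsDomSet D ↔ (∀ H ∈ D, H ≠ ⊥ ∧ H ≠ ⊤) ∧
      ∀ K : Subgroup G, K ≠ ⊥ → K ≠ ⊤ → ∃ W ∈ D, K ⊓ W ≠ ⊥ := by
  refine and_congr_right fun _ => forall₃_congr fun K hbot _ => ⟨?_, ?_⟩
  · rintro (hK | ⟨W, hW, -, hinf⟩)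
    · exact ⟨K, hK, by rwa [inf_idem]⟩
    · exact ⟨W, hW, hinf⟩
  · rintro ⟨W, hW, hinf⟩
    obtain rfl | hne := eq_or_ne W K
    · exact .inl hW
    · exact .inr ⟨W, hW, hne, hinf⟩

theorem IsDomSet.nonempty (hD : IsDomSet D) (hG : ∃ K : Subgroup G, K ≠ ⊥ ∧ K ≠ ⊤) :
    D.Nonempty := by
  obtain ⟨K, hbot, htop⟩ := hG
  obtain ⟨W, hW, -⟩ := (isDomSet_iff_exists_inf_ne_bot.1 hD).2 K hbot htop
  exact ⟨W, hW⟩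

theorem IsDomSet.exists_inf_ne_bot (hD : IsDomSet D) (hne : D.Nonempty) {K : Subgroup G}
    (hK : K ≠ ⊥) : ∃ W ∈ D, K ⊓ W ≠ ⊥ := by
  obtain rfl | htop := eq_or_ne K ⊤
  · obtain ⟨W, hW⟩ := hne
    exact ⟨W, hW, by simpa only [top_inf_eq] using (hD.1 W hW).1⟩
  · exact (isDomSet_iff_exists_inf_ne_bot.1 hD).2 K hK htop

theorem isDomSet_setOf_ne_bot_and_ne_top :
    IsDomSet {H : Subgroup G | H ≠ ⊥ ∧ H ≠ ⊤} :=
  ⟨fun _ hH => hH, fun _ hbot htop => .inl ⟨hbot, htop⟩⟩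

theorem IsDomSet.eDomNumber_le (hD : IsDomSet D) : eDomNumber G ≤ D.encard :=
  iInf_le (fun D : {D : Set (Subgroup G) // IsDomSet D} => D.1.encard) ⟨D, hD⟩

theorem natCast_domNumber (G : Type*) [Group G] [Finite (Subgroup G)] :
    (domNumber G : ℕ∞) = eDomNumber G := by
  have hne : {n | ∃ D : Set (Subgroup G), IsDomSet D ∧ D.ncard = n}.Nonempty :=
    ⟨_, _, isDomSet_setOf_ne_bot_and_ne_top, rfl⟩
  apply le_antisymm
  · refine le_iInf fun ⟨D, hD⟩ => ?_
    rw [← D.toFinite.cast_ncard_eq]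
    exact Nat.cast_le.2 (Nat.sInf_le ⟨D, hD, rfl⟩)
  · obtain ⟨D, hD, hcard⟩ := Nat.sInf_mem hne
    calc eDomNumber G ≤ D.encard := hD.eDomNumber_le
      _ = D.ncard := D.toFinite.cast_ncard_eq.symm
      _ = domNumber G := congrArg Nat.cast hcard

end DominatingSets

section Correspondence

variable {G Q : Type*} [Group G] [Group Q] {f : G →* Q} {D : Set (Subgroup Q)}

theorem map_inf_comap (f : G →* Q) (K : Subgroup G) (V : Subgroup Q) :
    (K ⊓ V.comap f).map f = K.map f ⊓ V :=
  SetLike.coe_injective (Set.image_inter_preimage f K V)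

theorem ker_lt_comap_of_surjective (hf : Function.Surjective f) {V : Subgroup Q} :
    f.ker < V.comap f ↔ V ≠ ⊥ := by
  rw [← MonoidHom.comap_bot, Subgroup.comap_lt_comap_of_surjective hf, bot_lt_iff_ne_bot]

theorem comap_eq_top_of_surjective (hf : Function.Surjective f) {V : Subgroup Q} :
    V.comap f = ⊤ ↔ V = ⊤ := by
  rw [← Subgroup.comap_top f, (Subgroup.comap_injective hf).eq_iff]

theorem setOf_ker_lt_and_map_mem_eq_image_comap (hf : Function.Surjective f)
    (hD : ∀ V ∈ D, V ≠ ⊥ ∧ V ≠ ⊤) :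
    {W : Subgroup G | f.ker < W ∧ W ≠ ⊤ ∧ W.map f ∈ D} = Subgroup.comap f '' D := by
  ext W
  constructor
  · rintro ⟨hker, -, hW⟩
    exact ⟨W.map f, hW, Subgroup.comap_map_eq_self hker.le⟩
  · rintro ⟨V, hV, rfl⟩
    refine ⟨(ker_lt_comap_of_surjective hf).2 (hD V hV).1,
      (comap_eq_top_of_surjective hf).not.2 (hD V hV).2, ?_⟩
    rwa [Subgroup.map_comap_eq_self_of_surjective hf]

theorem IsDomSet.exists_inf_comap_ne_bot (hD : IsDomSet D) (hne : D.Nonempty) (f : G →* Q)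
    {K : Subgroup G} (hK : K ≠ ⊥) : ∃ V ∈ D, K ⊓ V.comap f ≠ ⊥ := by
  by_cases hmap : K.map f = ⊥
  · obtain ⟨V, hV⟩ := hne
    have hle : K ≤ V.comap f :=
      ((Subgroup.map_eq_bot_iff K).1 hmap).trans (Subgroup.ker_le_comap f V)
    exact ⟨V, hV, by rwa [inf_eq_left.2 hle]⟩
  · obtain ⟨V, hV, hinf⟩ := hD.exists_inf_ne_bot hne hmap
    refine ⟨V, hV, fun hbot => hinf ?_⟩
    rw [← map_inf_comap, hbot, Subgroup.map_bot]

theorem IsDomSet.image_comap (hD : IsDomSet D) (hne : D.Nonempty)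
    (hf : Function.Surjective f) : IsDomSet (Subgroup.comap f '' D) := by
  refine isDomSet_iff_exists_inf_ne_bot.2 ⟨?_, fun K hbot _ => ?_⟩
  · rintro _ ⟨V, hV, rfl⟩
    exact ⟨(bot_le.trans_lt ((ker_lt_comap_of_surjective hf).2 (hD.1 V hV).1)).ne',
      (comap_eq_top_of_surjective hf).not.2 (hD.1 V hV).2⟩
  · obtain ⟨V, hV, hinf⟩ := hD.exists_inf_comap_ne_bot hne f hbot
    exact ⟨V.comap f, Set.mem_image_of_mem _ hV, hinf⟩

theorem eDomNumber_le_of_surjective (hf : Function.Surjective f)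
    (hQ : ∃ K : Subgroup Q, K ≠ ⊥ ∧ K ≠ ⊤) : eDomNumber G ≤ eDomNumber Q :=
  le_iInf fun ⟨D, hD⟩ =>
    calc eDomNumber G ≤ (Subgroup.comap f '' D).encard :=
          (hD.image_comap (hD.nonempty hQ) hf).eDomNumber_le
      _ = D.encard := (Subgroup.comap_injective hf).encard_image D

theorem domSet_of_quotient_general (hf : Function.Surjective f)
    (hQ : ∃ K : Subgroup Q, K ≠ ⊥ ∧ K ≠ ⊤) (hD : IsDomSet D) :
    (IsDomSet {W : Subgroup G | f.ker < W ∧ W ≠ ⊤ ∧ W.map f ∈ D} ∧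
      {W : Subgroup G | f.ker < W ∧ W ≠ ⊤ ∧ W.map f ∈ D}.encard = D.encard) ∧
    eDomNumber G ≤ eDomNumber Q := by
  rw [setOf_ker_lt_and_map_mem_eq_image_comap hf hD.1]
  exact ⟨⟨hD.image_comap (hD.nonempty hQ) hf, (Subgroup.comap_injective hf).encard_image D⟩,
    eDomNumber_le_of_surjective hf hQ⟩

end Correspondence

/-- Let `N` be a normal subgroup of the finite group `G` such that `G/N` has a
proper non-trivial subgroup. If `D` is a dominating set of `Γ(G/N)`, then the
set `{W | N < W < G and W/N ∈ D}` is a dominating set of `Γ(G)` of the same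
cardinality as `D`. In particular `γ(G) ≤ γ(G/N)`. -/
theorem domSet_of_quotient {G : Type*} [Group G] [Finite G]
    (N : Subgroup G) [N.Normal]
    (hQ : ∃ K : Subgroup (G ⧸ N), K ≠ ⊥ ∧ K ≠ ⊤)
    (D : Set (Subgroup (G ⧸ N))) (hD : IsDomSet D) :
    (IsDomSet {W : Subgroup G | N < W ∧ W ≠ ⊤ ∧ W.map (QuotientGroup.mk' N) ∈ D} ∧
      {W : Subgroup G | N < W ∧ W ≠ ⊤ ∧ W.map (QuotientGroup.mk' N) ∈ D}.ncard =
        D.ncard) ∧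
    domNumber G ≤ domNumber (G ⧸ N) := by
  have h := domSet_of_quotient_general (QuotientGroup.mk'_surjective N) hQ hD
  rw [QuotientGroup.ker_mk', ← natCast_domNumber, ← natCast_domNumber, Nat.cast_le] at h
  exact ⟨⟨h.1.1, congrArg ENat.toNat h.1.2⟩, h.2⟩
end

section
/- Let G be a finite group, p a prime, and N a normal p-subgroup of G such that there exists a proper non-trivial p-subgroup of G strictly containing N. Let D be a set of proper non-trivial p-subgroups of G, each strictly containing N, with the property that for every proper non-trivial p-subgroup K of G strictly containing N, either K ∈ D or there exists W ∈ D with K ∩ W strictly containing N. Then D dominates the intersection graph of all proper non-trivial p-subgroups of G: every proper non-trivial p-subgroup H of G either belongs to D or satisfies H ∩ W ≠ 1 for some W ∈ D. -/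
/-!
If `H ≤ N`, every `W ∈ D` contains `H`. Otherwise `H ⊔ N` lies strictly above `N`, so it meets some
`W ∈ D` in a subgroup strictly above `N`. By Dedekind's modular law `(H ⊔ N) ⊓ W = (H ⊓ W) ⊔ N`,
which would collapse to `N` if `H ⊓ W` were trivial.
-/

section Group

variable {G : Type*} [Group G] {N : Subgroup G} [N.Normal]

theorem sup_normal_inf_eq_inf_sup (H : Subgroup G) {W : Subgroup G} (hNW : N ≤ W) :
    (H ⊔ N) ⊓ W = H ⊓ W ⊔ N := by
  apply SetLike.coe_injective
  rw [inf_comm, inf_comm H, Subgroup.coe_inf, Subgroup.mul_normal, Subgroup.mul_normal,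
    Subgroup.inf_mul_assoc W H N hNW]

theorem inf_ne_bot_of_lt_sup_normal_inf {H W : Subgroup G} (hlt : N < (H ⊔ N) ⊓ W) :
    H ⊓ W ≠ ⊥ := by
  intro hbot
  rw [sup_normal_inf_eq_inf_sup H (hlt.le.trans inf_le_right), hbot, bot_sup_eq] at hlt
  exact hlt.false

theorem pSubgroups_dominated_general {𝓕 : Set (Subgroup G)} (hsup : ∀ H ∈ 𝓕, H ⊔ N ∈ 𝓕)
    (hex : ∃ K ∈ 𝓕, K ≠ ⊤ ∧ N < K) {D : Set (Subgroup G)} (hDmem : ∀ W ∈ D, N < W)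
    (hDdom : ∀ K ∈ 𝓕, K ≠ ⊤ → N < K → K ∈ D ∨ ∃ W ∈ D, N < K ⊓ W)
    {H : Subgroup G} (hH : H ∈ 𝓕) (hHbot : H ≠ ⊥) :
    ∃ W ∈ D, H ⊓ W ≠ ⊥ := by
  have meets_of_ne_top (K) (hK : K ∈ 𝓕) (hKtop : K ≠ ⊤) (hNK : N < K) :
      ∃ W ∈ D, N < K ⊓ W :=
    (hDdom K hK hKtop hNK).elim (fun hKD ↦ ⟨K, hKD, by rwa [inf_idem]⟩) id
  obtain ⟨W₀, hW₀⟩ : D.Nonempty := by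
    obtain ⟨K, hK, hKtop, hNK⟩ := hex
    obtain ⟨W, hW, -⟩ := meets_of_ne_top K hK hKtop hNK
    exact ⟨W, hW⟩
  by_cases hHN : H ≤ N
  · have hHW₀ : H ≤ W₀ := hHN.trans (hDmem W₀ hW₀).le
    exact ⟨W₀, hW₀, by rwa [inf_eq_left.mpr hHW₀]⟩
  · obtain ⟨W, hW, hlt⟩ : ∃ W ∈ D, N < (H ⊔ N) ⊓ W := by
      by_cases htop : H ⊔ N = ⊤
      · exact ⟨W₀, hW₀, by simpa only [htop, top_inf_eq] using hDmem W₀ hW₀⟩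
      · exact meets_of_ne_top _ (hsup H hH) htop (right_lt_sup.mpr hHN)
    exact ⟨W, hW, inf_ne_bot_of_lt_sup_normal_inf hlt⟩

end Group

/-- Let `N` be a normal `p`-subgroup of a finite group `G` such that some proper
non-trivial `p`-subgroup of `G` strictly contains `N`. If `D` is a set of proper
non-trivial `p`-subgroups of `G`, each strictly containing `N`, such that every
proper non-trivial `p`-subgroup `K` strictly containing `N` either belongs to `D`
or meets some `W ∈ D` in a subgroup strictly containing `N`, then every proper
non-trivial `p`-subgroup `H` of `G` either belongs to `D` or satisfies
`H ⊓ W ≠ ⊥` for some `W ∈ D`. -/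
theorem pSubgroups_dominated {G : Type*} [Group G] [Finite G] {p : ℕ} (hp : p.Prime)
    (N : Subgroup G) [N.Normal] (hNp : IsPGroup p N)
    (hex : ∃ K : Subgroup G, IsPGroup p K ∧ K ≠ ⊤ ∧ N < K)
    (D : Set (Subgroup G))
    (hDmem : ∀ W ∈ D, IsPGroup p W ∧ W ≠ ⊤ ∧ N < W)
    (hDdom : ∀ K : Subgroup G, IsPGroup p K → K ≠ ⊤ → N < K →
      K ∈ D ∨ ∃ W ∈ D, N < K ⊓ W) :
    ∀ H : Subgroup G, IsPGroup p H → H ≠ ⊥ → H ≠ ⊤ →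
      H ∈ D ∨ ∃ W ∈ D, H ⊓ W ≠ ⊥ := by
  exact fun H hH hHbot _ ↦ .inr <| pSubgroups_dominated_general (𝓕 := {H | IsPGroup p H})
    (fun _ hK ↦ hK.to_sup_of_normal_right hNp) hex (fun W hW ↦ (hDmem W hW).2.2) hDdom hH hHbot
end

section
/- Let G be a finite abelian group having at least one proper non-trivial subgroup. Then γ(G) = 1 if and only if sfp(G) < exp(G), where sfp(G) is the product of the distinct primes dividing |G| and exp(G) is the exponent of G. -/
/-!
A single subgroup `H` dominates exactly when it meets every non-trivial subgroup. In a torsion group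
the minimal non-trivial subgroups are the cyclic ones of prime order, so this says that `H` contains
every element of prime order. Hence `γ(G) = 1` iff the elements of prime order generate a proper
subgroup `Ω`. In an abelian group `Ω` consists of the elements of square-free order, so it is all of
`G` iff the exponent is square-free, that is, equal to its radical; and `exp(G)` has the same prime
divisors as `|G|`.
-/

open Monoid Subgroup UniqueFactorizationMonoid

section Arithmetic

theorem isRadical_lcm {M : Type*} [CommMonoidWithZero M] [GCDMonoid M] {a b : M}
    (ha : IsRadical a) (hb : IsRadical b) : IsRadical (lcm a b) := fun n x h ↦
  lcm_dvd (ha n x ((dvd_lcm_left a b).trans h)) (hb n x ((dvd_lcm_right a b).trans h))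

theorem squarefree_lcm {M : Type*} [CommMonoidWithZero M] [GCDMonoid M] [Nontrivial M] {a b : M}
    (ha : Squarefree a) (hb : Squarefree b) : Squarefree (lcm a b) :=
  (isRadical_lcm ha.isRadical hb.isRadical).squarefree
    (mt (lcm_eq_zero_iff a b).1 (not_or.2 ⟨ha.ne_zero, hb.ne_zero⟩))

theorem radical_lt_self_iff_not_squarefree {n : ℕ} (hn : n ≠ 0) :
    radical n < n ↔ ¬Squarefree n := by
  have radical_eq_iff : radical n = n ↔ Squarefree n :=
    ⟨fun h ↦ h ▸ squarefree_radical, fun h ↦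
      (radical_associated h.isRadical hn).eq_of_normalized (normalize_eq _) (normalize_eq _)⟩
  rw [(Nat.radical_le_self_iff.2 hn).lt_iff_ne, Ne, radical_eq_iff]

end Arithmetic

section PrimeOrder

variable {G : Type*} [Group G]

theorem primeFactors_exponent [Finite G] :
    (exponent G).primeFactors = (Nat.card G).primeFactors := by
  refine (Nat.primeFactors_mono Group.exponent_dvd_nat_card Nat.card_pos.ne').antisymm
    fun p hp ↦ ?_
  have : Fact p.Prime := ⟨Nat.prime_of_mem_primeFactors hp⟩
  obtain ⟨x, hx⟩ := exists_prime_orderOf_dvd_card' p (Nat.dvd_of_mem_primeFactors hp)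
  exact Nat.mem_primeFactors.2
    ⟨Fact.out, hx ▸ order_dvd_exponent x, exponent_ne_zero_of_finite⟩

theorem isAtom_of_prime_card {H : Subgroup G} (hH : (Nat.card H).Prime) : IsAtom H := by
  have : Fact (Nat.card H).Prime := ⟨hH⟩
  refine ⟨fun hbot ↦ hH.ne_one (card_eq_one.2 hbot), fun K hK ↦ ?_⟩
  rcases (K.subgroupOf H).eq_bot_or_eq_top_of_prime_card with hbot | htop
  · exact (subgroupOf_eq_bot.1 hbot).eq_bot_of_le hK.le
  · exact absurd (subgroupOf_eq_top.1 htop) hK.not_ge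

theorem exists_mem_prime_orderOf (hG : IsMulTorsion G) {K : Subgroup G} (hK : K ≠ ⊥) :
    ∃ x ∈ K, (orderOf x).Prime := by
  obtain ⟨x, hxK, hx⟩ := K.bot_or_exists_ne_one.resolve_left hK
  obtain ⟨p, hp, hpx⟩ := Nat.exists_prime_and_dvd (mt orderOf_eq_one_iff.1 hx)
  refine ⟨x ^ (orderOf x / p), K.pow_mem hxK _, ?_⟩
  rwa [orderOf_pow_orderOf_div (hG x).orderOf_pos.ne' hpx]

variable (G) in
/-- The subgroup `Ω` generated by the elements of prime order, i.e. the join of the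
subgroups of prime order. -/
def primeOrderSubgroup : Subgroup G :=
  closure {x | (orderOf x).Prime}

theorem mem_primeOrderSubgroup_of_prime {x : G} (hx : (orderOf x).Prime) :
    x ∈ primeOrderSubgroup G :=
  subset_closure hx

instance primeOrderSubgroup_characteristic : (primeOrderSubgroup G).Characteristic := by
  refine characteristic_iff_map_le.2 fun φ ↦ ?_
  rw [primeOrderSubgroup, MonoidHom.map_closure]
  refine closure_mono ?_
  rintro _ ⟨x, hx, rfl⟩
  simpa only [Set.mem_ofPred_eq, MulEquiv.toMonoidHom_eq_coe, MonoidHom.coe_coe,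
    MulEquiv.orderOf_eq] using hx

theorem primeOrderSubgroup_le_iff (hG : IsMulTorsion G) {H : Subgroup G} :
    primeOrderSubgroup G ≤ H ↔ ∀ K : Subgroup G, K ≠ ⊥ → ¬Disjoint K H := by
  constructor
  · intro hH K hK hdisj
    obtain ⟨x, hxK, hx⟩ := exists_mem_prime_orderOf hG hK
    have hx1 : x = 1 := Subgroup.disjoint_def.1 hdisj hxK (hH (mem_primeOrderSubgroup_of_prime hx))
    exact hx.ne_one (orderOf_eq_one_iff.2 hx1)
  · intro hH
    refine (closure_le H).2 fun x hx ↦ zpowers_le.1 ?_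
    have hatom : IsAtom (zpowers x) := isAtom_of_prime_card (by rwa [Nat.card_zpowers])
    exact hatom.not_disjoint_iff_le.1 (hH _ hatom.ne_bot)

-- For a prime `q` dividing the order `d` of `x` in `G ⧸ Ω`, the power `x ^ (orderOf x / q)` has
-- order `q` and so dies in the quotient; thus `q ∣ d ∣ orderOf x / q`, i.e. `q ^ 2 ∣ orderOf x`.
theorem mem_primeOrderSubgroup_of_squarefree {x : G} (hx : Squarefree (orderOf x)) :
    x ∈ primeOrderSubgroup G := by
  rw [← QuotientGroup.eq_one_iff, ← orderOf_eq_one_iff]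
  by_contra hd
  obtain ⟨q, hq, hqd⟩ := Nat.exists_prime_and_dvd hd
  have hqx : q ∣ orderOf x := hqd.trans (orderOf_map_dvd (QuotientGroup.mk' _) x)
  have hpow : x ^ (orderOf x / q) ∈ primeOrderSubgroup G :=
    mem_primeOrderSubgroup_of_prime (by rwa [orderOf_pow_orderOf_div hx.ne_zero hqx])
  have hqdiv : q ∣ orderOf x / q := hqd.trans <| orderOf_dvd_of_pow_eq_one <| by
    rwa [← QuotientGroup.mk_pow, QuotientGroup.eq_one_iff]
  exact Nat.squarefree_iff_prime_squarefree.1 hx q hq ((Nat.dvd_div_iff_mul_dvd hqx).1 hqdiv)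

end PrimeOrder

section CommGroup

variable {G : Type*} [CommGroup G]

theorem mem_primeOrderSubgroup_iff_squarefree {x : G} :
    x ∈ primeOrderSubgroup G ↔ Squarefree (orderOf x) := by
  refine ⟨fun hx ↦ ?_, mem_primeOrderSubgroup_of_squarefree⟩
  induction hx using closure_induction with
  | mem y hy => exact hy.prime.squarefree
  | one => simp
  | mul y z _ _ hy hz =>
    exact (squarefree_lcm hy hz).squarefree_of_dvd (Commute.all y z).orderOf_mul_dvd_lcm
  | inv y _ hy => rwa [orderOf_inv]

theorem primeOrderSubgroup_eq_top_iff_squarefree_exponent (hG : ExponentExists G) :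
    primeOrderSubgroup G = ⊤ ↔ Squarefree (exponent G) := by
  simp only [eq_top_iff', mem_primeOrderSubgroup_iff_squarefree]
  refine ⟨fun h ↦ ?_, fun h x ↦ h.squarefree_of_dvd (order_dvd_exponent x)⟩
  obtain ⟨x, hx⟩ := exists_orderOf_eq_exponent hG
  exact hx ▸ h x

end CommGroup

section Domination

variable {G : Type*} [Group G]

theorem isDomSet_singleton_iff {H : Subgroup G} :
    IsDomSet {H} ↔ (H ≠ ⊥ ∧ H ≠ ⊤) ∧ ∀ K : Subgroup G, K ≠ ⊥ → ¬Disjoint K H := by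
  simp only [IsDomSet, Set.mem_singleton_iff, forall_eq, exists_eq_left, disjoint_iff]
  refine and_congr_right fun hH ↦ ⟨fun h K hK ↦ ?_, fun h K hK _ ↦ ?_⟩
  · by_cases hK' : K = ⊤
    · simpa only [hK', top_inf_eq] using hH.1
    · rcases h K hK hK' with rfl | ⟨-, hKH⟩
      · rwa [inf_idem]
      · exact hKH
  · exact or_iff_not_imp_left.2 fun hKH ↦ ⟨Ne.symm hKH, h K hK⟩

variable (G) in
theorem exists_isDomSet_ncard_eq_domNumber :
    ∃ D : Set (Subgroup G), IsDomSet D ∧ D.ncard = domNumber G :=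
  Nat.sInf_mem (s := {n | ∃ D : Set (Subgroup G), IsDomSet D ∧ D.ncard = n})
    ⟨_, {H | H ≠ ⊥ ∧ H ≠ ⊤}, ⟨fun _ hH ↦ hH, fun _ hK hK' ↦ .inl ⟨hK, hK'⟩⟩, rfl⟩

theorem domNumber_ne_zero [Finite G] {K : Subgroup G} (hK : K ≠ ⊥) (hK' : K ≠ ⊤) :
    domNumber G ≠ 0 := by
  obtain ⟨D, hD, hcard⟩ := exists_isDomSet_ncard_eq_domNumber G
  rw [← hcard, Ne, Set.ncard_eq_zero]
  rintro rfl
  simpa only [Set.mem_empty_iff_false, false_and, exists_false, or_false] using hD.2 K hK hK'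

theorem domNumber_eq_one_iff_exists_isDomSet_singleton [Finite G] :
    domNumber G = 1 ↔ ∃ H : Subgroup G, IsDomSet {H} := by
  constructor
  · intro h
    obtain ⟨D, hD, hcard⟩ := exists_isDomSet_ncard_eq_domNumber G
    obtain ⟨H, rfl⟩ := Set.ncard_eq_one.1 (hcard.trans h)
    exact ⟨H, hD⟩
  · rintro ⟨H, hH⟩
    have domNumber_le : domNumber G ≤ 1 := Nat.sInf_le ⟨{H}, hH, Set.ncard_singleton H⟩
    obtain ⟨hbot, htop⟩ := hH.1 H rfl
    exact domNumber_le.antisymm (Nat.one_le_iff_ne_zero.2 (domNumber_ne_zero hbot htop))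

theorem domNumber_eq_one_iff_primeOrderSubgroup_ne_top [Finite G] :
    domNumber G = 1 ↔ primeOrderSubgroup G ≠ ⊤ := by
  simp only [domNumber_eq_one_iff_exists_isDomSet_singleton, isDomSet_singleton_iff,
    ← primeOrderSubgroup_le_iff isMulTorsion_of_finite]
  refine ⟨fun ⟨H, hH, hle⟩ htop ↦ hH.2 (top_le_iff.1 (htop ▸ hle)), fun hne ↦
    ⟨primeOrderSubgroup G, ⟨fun hbot ↦ ?_, hne⟩, le_rfl⟩⟩
  have top_eq_bot : (⊤ : Subgroup G) = ⊥ := by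
    by_contra htop
    exact (primeOrderSubgroup_le_iff isMulTorsion_of_finite).1 hbot.le ⊤ htop disjoint_bot_right
  exact hne (hbot.trans top_eq_bot.symm)

end Domination

/-- A finite abelian group `G` with a proper non-trivial subgroup satisfies
`γ(G) = 1` iff the square-free part of `|G|` is strictly less than the exponent
of `G`. -/
theorem abelian_domNumber_eq_one_iff {G : Type*} [CommGroup G] [Finite G]
    (hG : ∃ K : Subgroup G, K ≠ ⊥ ∧ K ≠ ⊤) :
    domNumber G = 1 ↔ (∏ p ∈ (Nat.card G).primeFactors, p) < Monoid.exponent G := by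
  rw [domNumber_eq_one_iff_primeOrderSubgroup_ne_top, Ne,
    primeOrderSubgroup_eq_top_iff_squarefree_exponent .of_finite,
    ← radical_lt_self_iff_not_squarefree exponent_ne_zero_of_finite,
    Nat.radical_eq_prod_primeFactors, primeFactors_exponent]
end

section
/- Let n ≥ 2 be an integer, let D_{2n} be the dihedral group of order 2n, and let p be the smallest prime dividing n. Then γ(D_{2n}) = p if p² divides n, and γ(D_{2n}) = p + 1 otherwise. -/
/-!
In a finite non-cyclic group, a family of proper non-trivial subgroups dominates if and only if
it covers every element of prime order. In `D_{2n}` these elements are the `n` reflections and the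
rotations of prime order.

A proper subgroup containing reflections contains `n / d` of them, where `d ≥ p` is the index of
its rotations among all rotations, so covering the reflections takes at least `p` subgroups. If
only `p` are used, each of them has `d = p`; when `p² ∤ n` none of these contains a rotation of
order `p`, and an additional subgroup is needed.

Conversely the `p` preimages in `D_{2n}` of the reflection subgroups of `D_{2p}` cover the
reflections. They contain all rotations of prime order when `p² ∣ n`, and otherwise the subgroup of
all rotations completes the dominating set.
-/

open DihedralGroup Subgroup

section Group

variable {G : Type*} [Group G]

theorem disjoint_zpowers_iff_notMem {g : G} (hg : (orderOf g).Prime) {W : Subgroup G} :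
    Disjoint (zpowers g) W ↔ g ∉ W := by
  have : Fact (Nat.card (zpowers g)).Prime := ⟨by rwa [Nat.card_zpowers]⟩
  constructor
  · intro hdisj hgW
    have : g = 1 := disjoint_def.mp hdisj (mem_zpowers g) hgW
    exact hg.ne_one (orderOf_eq_one_iff.mpr this)
  · intro hgW
    rcases (W.subgroupOf (zpowers g)).eq_bot_or_eq_top_of_prime_card with hbot | htop
    · exact (subgroupOf_eq_bot.mp hbot).symm
    · exact absurd (subgroupOf_eq_top.mp htop (mem_zpowers g)) hgW

theorem exists_prime_orderOf_mem [Finite G] {K : Subgroup G} (hK : K ≠ ⊥) :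
    ∃ g ∈ K, (orderOf g).Prime := by
  have hcard : Nat.card K ≠ 1 := fun h => hK (eq_bot_of_card_eq K h)
  have : Fact (Nat.card K).minFac.Prime := ⟨Nat.minFac_prime hcard⟩
  obtain ⟨g, hg⟩ := exists_prime_orderOf_dvd_card' (Nat.card K).minFac (Nat.minFac_dvd _)
  exact ⟨g, g.2, by rw [orderOf_coe, hg]; exact Nat.minFac_prime hcard⟩

theorem minFac_card_le_index {A : Type*} [AddGroup A] [Finite A] {B : AddSubgroup A}
    (hB : B ≠ ⊤) : (Nat.card A).minFac ≤ B.index := by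
  have hone : B.index ≠ 1 := mt AddSubgroup.index_eq_one.mp hB
  have hzero : B.index ≠ 0 := B.index_ne_zero_of_finite
  exact Nat.minFac_le_of_dvd (by lia) B.index_dvd_card

theorem isDomSet_iff_not_disjoint {D : Set (Subgroup G)} :
    IsDomSet D ↔ (∀ H ∈ D, H ≠ ⊥ ∧ H ≠ ⊤) ∧
      ∀ K : Subgroup G, K ≠ ⊥ → K ≠ ⊤ → ∃ W ∈ D, ¬ Disjoint K W := by
  refine and_congr_right fun _ => forall₃_congr fun K hbot _ => ?_
  simp only [disjoint_iff]
  constructor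
  · rintro (hK | ⟨W, hW, -, hKW⟩)
    · exact ⟨K, hK, by rwa [inf_idem]⟩
    · exact ⟨W, hW, hKW⟩
  · rintro ⟨W, hW, hKW⟩
    rcases eq_or_ne W K with rfl | hne
    · exact Or.inl hW
    · exact Or.inr ⟨W, hW, hne, hKW⟩

theorem isDomSet_iff_prime_orderOf [Finite G] (hG : ¬ IsCyclic G) {D : Set (Subgroup G)} :
    IsDomSet D ↔ (∀ H ∈ D, H ≠ ⊥ ∧ H ≠ ⊤) ∧
      ∀ g : G, (orderOf g).Prime → ∃ W ∈ D, g ∈ W := by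
  rw [isDomSet_iff_not_disjoint]
  refine and_congr_right fun _ => ⟨fun hD g hg => ?_, fun hD K hbot _ => ?_⟩
  · have hne_bot : zpowers g ≠ ⊥ := by
      rw [Ne, zpowers_eq_bot, ← orderOf_eq_one_iff]
      exact hg.ne_one
    have hne_top : zpowers g ≠ ⊤ := fun h => hG (isCyclic_iff_exists_zpowers_eq_top.mpr ⟨g, h⟩)
    obtain ⟨W, hW, hgW⟩ := hD _ hne_bot hne_top
    exact ⟨W, hW, by rwa [disjoint_zpowers_iff_notMem hg, not_not] at hgW⟩
  · obtain ⟨g, hgK, hg⟩ := exists_prime_orderOf_mem hbot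
    obtain ⟨W, hW, hgW⟩ := hD g hg
    refine ⟨W, hW, fun hdisj => ?_⟩
    exact (disjoint_zpowers_iff_notMem hg).mp (hdisj.mono_left (zpowers_le.mpr hgK)) hgW

theorem IsDomSet.domNumber_eq {D : Set (Subgroup G)} {k : ℕ} (hD : IsDomSet D)
    (hcard : D.ncard = k) (hmin : ∀ E : Set (Subgroup G), IsDomSet E → k ≤ E.ncard) :
    domNumber G = k := by
  refine IsLeast.csInf_eq ⟨⟨D, hD, hcard⟩, ?_⟩
  rintro _ ⟨E, hE, rfl⟩
  exact hmin E hE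

end Group

section Rotations

variable {n : ℕ}

theorem orderOf_r_eq_addOrderOf (j : ZMod n) : orderOf (r j) = addOrderOf j := by
  rw [← orderOf_ofAdd_eq_addOrderOf, orderOf_eq_orderOf_iff]
  intro k
  rw [r_pow, one_def, r.injEq, ← ofAdd_nsmul, ofAdd_eq_one, nsmul_eq_mul, mul_comm]

theorem r_mem_zpowers_r_one (j : ZMod n) : r j ∈ zpowers (r (1 : ZMod n)) := by
  obtain ⟨k, rfl⟩ := ZMod.intCast_surjective j
  exact ⟨k, r_one_zpow k⟩

theorem sr_notMem_zpowers_r (i j : ZMod n) : sr j ∉ zpowers (r i) := by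
  rintro ⟨k, hk⟩
  simp only [r_zpow, reduceCtorEq] at hk

end Rotations

section Parts

variable {n : ℕ}

/-- The exponents of the rotations in a subgroup of the dihedral group. -/
def rotationPart (W : Subgroup (DihedralGroup n)) : AddSubgroup (ZMod n) where
  carrier := {j | r j ∈ W}
  zero_mem' := W.one_mem
  add_mem' := W.mul_mem
  neg_mem' := W.inv_mem

/-- The exponents of the reflections in a subgroup of the dihedral group: either empty or a coset
of its rotation part. -/
def reflectionPart (W : Subgroup (DihedralGroup n)) : Set (ZMod n) :=
  {j | sr j ∈ W}

variable {W : Subgroup (DihedralGroup n)} {i : ZMod n}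

open scoped Pointwise in
theorem reflectionPart_eq_vadd (hi : i ∈ reflectionPart W) :
    reflectionPart W = i +ᵥ (rotationPart W : Set (ZMod n)) := by
  ext j
  rw [Set.mem_vadd_set_iff_neg_vadd_mem, vadd_eq_add, neg_add_eq_sub]
  exact (W.mul_mem_cancel_left hi).symm

theorem rotationPart_ne_top (hW : W ≠ ⊤) (hi : i ∈ reflectionPart W) : rotationPart W ≠ ⊤ := by
  intro htop
  have hr (j : ZMod n) : r j ∈ W := htop.ge (AddSubgroup.mem_top j)
  refine hW (eq_top_iff.mpr ?_)
  rintro (j | j) -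
  · exact hr j
  · simpa only [sr_mul_r, add_sub_cancel] using W.mul_mem hi (hr (j - i))

theorem ncard_reflectionPart_mul_index (hi : i ∈ reflectionPart W) :
    (reflectionPart W).ncard * (rotationPart W).index = n := by
  rw [reflectionPart_eq_vadd hi, Set.ncard_vadd_set, ← Nat.card_coe_set_eq]
  exact (rotationPart W).card_mul_index.trans (Nat.card_zmod n)

theorem minFac_le_index_rotationPart [NeZero n] (hW : W ≠ ⊤) (hi : i ∈ reflectionPart W) :
    n.minFac ≤ (rotationPart W).index := by
  simpa only [Nat.card_zmod] using minFac_card_le_index (rotationPart_ne_top hW hi)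

theorem minFac_mul_ncard_reflectionPart_le [NeZero n] (hW : W ≠ ⊤) :
    n.minFac * (reflectionPart W).ncard ≤ n := by
  rcases (reflectionPart W).eq_empty_or_nonempty with hempty | ⟨i, hi⟩
  · simp only [hempty, Set.ncard_empty, mul_zero, zero_le]
  · calc n.minFac * (reflectionPart W).ncard
        ≤ (rotationPart W).index * (reflectionPart W).ncard := by
          gcongr
          exact minFac_le_index_rotationPart hW hi
      _ = n := by rw [mul_comm, ncard_reflectionPart_mul_index hi]

theorem minFac_mul_ncard_reflectionPart_lt [NeZero n] (hsq : ¬ n.minFac ^ 2 ∣ n) (hW : W ≠ ⊤)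
    {j : ZMod n} (hj : addOrderOf j = n.minFac) (hjW : r j ∈ W) :
    n.minFac * (reflectionPart W).ncard < n := by
  refine (minFac_mul_ncard_reflectionPart_le hW).lt_of_ne fun heq => hsq ?_
  obtain ⟨i, hi⟩ : (reflectionPart W).Nonempty := by
    refine Set.nonempty_of_ncard_ne_zero fun hzero => NeZero.ne n ?_
    rw [← heq, hzero, mul_zero]
  have hindex : (rotationPart W).index = n.minFac := by
    refine Nat.eq_of_mul_eq_mul_left ((Set.ncard_pos (Set.toFinite _)).mpr ⟨i, hi⟩) ?_
    rw [ncard_reflectionPart_mul_index hi, mul_comm, heq]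
  have hdvd : n.minFac ∣ Nat.card (rotationPart W) :=
    hj ▸ AddSubgroup.addOrderOf_dvd_natCard (rotationPart W) hjW
  calc n.minFac ^ 2 = n.minFac * n.minFac := sq _
    _ ∣ Nat.card (rotationPart W) * (rotationPart W).index := mul_dvd_mul hdvd hindex.symm.dvd
    _ = n := (rotationPart W).card_mul_index.trans (Nat.card_zmod n)

end Parts

section LowerBound

variable {n : ℕ} [NeZero n]

theorem IsDomSet.le_sum_ncard_reflectionPart (hn : n ≠ 1) {D : Finset (Subgroup (DihedralGroup n))}
    (hD : IsDomSet (D : Set (Subgroup (DihedralGroup n)))) :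
    n ≤ ∑ W ∈ D, (reflectionPart W).ncard := by
  have hcover : ⋃ W ∈ D, reflectionPart W = Set.univ := by
    refine Set.eq_univ_of_forall fun j => Set.mem_iUnion₂.mpr ?_
    obtain ⟨W, hW, hj⟩ := ((isDomSet_iff_prime_orderOf (not_isCyclic hn)).mp hD).2 (sr j)
      (by rw [orderOf_sr]; exact Nat.prime_two)
    exact ⟨W, hW, hj⟩
  calc n = (⋃ W ∈ D, reflectionPart W).ncard := by rw [hcover, Set.ncard_univ, Nat.card_zmod]
    _ ≤ ∑ W ∈ D, (reflectionPart W).ncard := D.set_ncard_biUnion_le _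

theorem IsDomSet.minFac_mul_le_sum (hn : n ≠ 1) {D : Finset (Subgroup (DihedralGroup n))}
    (hD : IsDomSet (D : Set (Subgroup (DihedralGroup n)))) :
    n.minFac * n ≤ ∑ W ∈ D, n.minFac * (reflectionPart W).ncard := by
  rw [← Finset.mul_sum]
  exact Nat.mul_le_mul_left _ (hD.le_sum_ncard_reflectionPart hn)

theorem IsDomSet.minFac_le_ncard (hn : n ≠ 1) {D : Set (Subgroup (DihedralGroup n))}
    (hD : IsDomSet D) : n.minFac ≤ D.ncard := by
  lift D to Finset (Subgroup (DihedralGroup n)) using D.toFinite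
  rw [Set.ncard_coe_finset]
  refine Nat.le_of_mul_le_mul_right ?_ (NeZero.pos n)
  calc n.minFac * n ≤ ∑ W ∈ D, n.minFac * (reflectionPart W).ncard := hD.minFac_mul_le_sum hn
    _ ≤ D.card * n := D.sum_le_card_nsmul _ n fun W hW =>
      minFac_mul_ncard_reflectionPart_le (hD.1 W hW).2

theorem exists_addOrderOf_eq_minFac (hn : n ≠ 1) : ∃ j : ZMod n, addOrderOf j = n.minFac := by
  have : Fact n.minFac.Prime := ⟨Nat.minFac_prime hn⟩
  have hdvd : n.minFac ∣ Nat.card (ZMod n) := by simpa only [Nat.card_zmod] using n.minFac_dvd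
  exact exists_prime_addOrderOf_dvd_card' n.minFac hdvd

theorem IsDomSet.minFac_lt_ncard (hn : n ≠ 1) (hsq : ¬ n.minFac ^ 2 ∣ n)
    {D : Set (Subgroup (DihedralGroup n))} (hD : IsDomSet D) : n.minFac < D.ncard := by
  lift D to Finset (Subgroup (DihedralGroup n)) using D.toFinite
  rw [Set.ncard_coe_finset]
  obtain ⟨j, hj⟩ := exists_addOrderOf_eq_minFac hn
  obtain ⟨V, hV, hjV⟩ := ((isDomSet_iff_prime_orderOf (not_isCyclic hn)).mp hD).2 (r j)
    (by rw [orderOf_r_eq_addOrderOf, hj]; exact Nat.minFac_prime hn)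
  refine lt_of_mul_lt_mul_right ?_ (Nat.zero_le n)
  calc n.minFac * n ≤ ∑ W ∈ D, n.minFac * (reflectionPart W).ncard := hD.minFac_mul_le_sum hn
    _ < ∑ _W ∈ D, n := Finset.sum_lt_sum
      (fun W hW => minFac_mul_ncard_reflectionPart_le (hD.1 W hW).2)
      ⟨V, hV, minFac_mul_ncard_reflectionPart_lt hsq (hD.1 V hV).2 hj hjV⟩
    _ = D.card * n := Finset.sum_const_nat fun _ _ => rfl

end LowerBound

section FiberSubgroup

variable {n : ℕ} {A : Type*} [AddCommGroup A]

/-- The subgroup of the dihedral group formed by the rotations with exponent in the kernel of `φ`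
and the reflections with exponent in the fiber of `φ` over `a`. For `φ` the reduction modulo a
divisor `d` of `n` it is the preimage of a reflection subgroup of the dihedral group of order
`2 * d`. -/
def fiberSubgroup (φ : ZMod n →+ A) (a : A) : Subgroup (DihedralGroup n) where
  carrier := {x | match x with
    | r j => φ j = 0
    | sr j => φ j = a}
  one_mem' := map_zero φ
  mul_mem' := by
    rintro (i | i) (j | j) hi hj <;> simp_all
  inv_mem' := by
    rintro (i | i) hi <;> simp_all

variable {φ : ZMod n →+ A} {a : A}

theorem r_mem_fiberSubgroup {j : ZMod n} : r j ∈ fiberSubgroup φ a ↔ φ j = 0 := Iff.rfl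

theorem sr_mem_fiberSubgroup {j : ZMod n} : sr j ∈ fiberSubgroup φ a ↔ φ j = a := Iff.rfl

theorem fiberSubgroup_injective (hφ : Function.Surjective φ) :
    Function.Injective (fiberSubgroup φ) := by
  intro a b hab
  obtain ⟨j, rfl⟩ := hφ a
  exact sr_mem_fiberSubgroup.mp (hab.le (sr_mem_fiberSubgroup.mpr rfl))

theorem fiberSubgroup_ne_bot (hφ : Function.Surjective φ) : fiberSubgroup φ a ≠ ⊥ := by
  obtain ⟨j, hj⟩ := hφ a
  intro hbot
  have : sr j = 1 := mem_bot.mp (hbot.le (sr_mem_fiberSubgroup.mpr hj))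
  simp only [one_def, reduceCtorEq] at this

theorem fiberSubgroup_ne_top [Nontrivial A] (hφ : Function.Surjective φ) :
    fiberSubgroup φ a ≠ ⊤ := by
  obtain ⟨b, hb⟩ := exists_ne (0 : A)
  obtain ⟨j, rfl⟩ := hφ b
  exact fun htop => hb (r_mem_fiberSubgroup.mp (htop.ge (mem_top (r j))))

theorem ncard_range_fiberSubgroup (hφ : Function.Surjective φ) :
    (Set.range (fiberSubgroup φ)).ncard = Nat.card A :=
  Set.ncard_range_of_injective (fiberSubgroup_injective hφ)

theorem zpowers_r_notMem_range_fiberSubgroup (hφ : Function.Surjective φ) (i : ZMod n) :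
    zpowers (r i) ∉ Set.range (fiberSubgroup φ) := by
  rintro ⟨a, ha⟩
  obtain ⟨j, hj⟩ := hφ a
  exact sr_notMem_zpowers_r i j (ha.le (sr_mem_fiberSubgroup.mpr hj))

variable [NeZero n] [Nontrivial A]

theorem isDomSet_range_fiberSubgroup (hn : n ≠ 1) (hφ : Function.Surjective φ)
    (hker : ∀ j, (addOrderOf j).Prime → φ j = 0) : IsDomSet (Set.range (fiberSubgroup φ)) := by
  refine (isDomSet_iff_prime_orderOf (not_isCyclic hn)).mpr ⟨?_, ?_⟩
  · rintro _ ⟨a, rfl⟩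
    exact ⟨fiberSubgroup_ne_bot hφ, fiberSubgroup_ne_top hφ⟩
  · rintro (j | j) hj
    · rw [orderOf_r_eq_addOrderOf] at hj
      exact ⟨_, ⟨0, rfl⟩, r_mem_fiberSubgroup.mpr (hker j hj)⟩
    · exact ⟨_, ⟨φ j, rfl⟩, sr_mem_fiberSubgroup.mpr rfl⟩

theorem isDomSet_insert_zpowers_range_fiberSubgroup (hn : n ≠ 1) (hφ : Function.Surjective φ) :
    IsDomSet (insert (zpowers (r 1)) (Set.range (fiberSubgroup φ))) := by
  refine (isDomSet_iff_prime_orderOf (not_isCyclic hn)).mpr ⟨?_, ?_⟩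
  · rintro _ (rfl | ⟨a, rfl⟩)
    · refine ⟨fun hbot => hn ?_, fun htop => sr_notMem_zpowers_r 1 0 (htop.ge (mem_top (sr 0)))⟩
      rw [← orderOf_r_one (n := n), orderOf_eq_one_iff, ← zpowers_eq_bot, hbot]
    · exact ⟨fiberSubgroup_ne_bot hφ, fiberSubgroup_ne_top hφ⟩
  · rintro (j | j) -
    · exact ⟨_, Or.inl rfl, r_mem_zpowers_r_one j⟩
    · exact ⟨_, Or.inr ⟨φ j, rfl⟩, sr_mem_fiberSubgroup.mpr rfl⟩

end FiberSubgroup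

section DomNumber

variable {n : ℕ} [NeZero n]

theorem castHom_eq_zero_of_prime_addOrderOf {p : ℕ} (hp : p.Prime) (hdvd : p ∣ n)
    (hsq : p ^ 2 ∣ n) {j : ZMod n} (hj : (addOrderOf j).Prime) :
    ZMod.castHom hdvd (ZMod p) j = 0 := by
  have hmul : addOrderOf j • j = 0 := addOrderOf_nsmul_eq_zero j
  generalize addOrderOf j = q at hj hmul
  obtain ⟨m, rfl⟩ := ZMod.natCast_zmod_surjective j
  rw [nsmul_eq_mul, ← Nat.cast_mul, ZMod.natCast_eq_zero_iff] at hmul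
  rw [map_natCast, ZMod.natCast_eq_zero_iff]
  have hpq : p * p ∣ q * m := (sq p ▸ hsq).trans hmul
  rcases hp.dvd_mul.mp (dvd_of_mul_left_dvd hpq) with hq | hm
  · obtain rfl : p = q := (Nat.prime_dvd_prime_iff_eq hp hj).mp hq
    exact Nat.dvd_of_mul_dvd_mul_left hp.pos hpq
  · exact hm

theorem domNumber_dihedralGroup_of_sq_dvd (hn : n ≠ 1) (hsq : n.minFac ^ 2 ∣ n) :
    domNumber (DihedralGroup n) = n.minFac := by
  have : Fact n.minFac.Prime := ⟨Nat.minFac_prime hn⟩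
  let φ : ZMod n →+ ZMod n.minFac := ZMod.castHom n.minFac_dvd (ZMod n.minFac)
  have hφ : Function.Surjective φ := ZMod.castHom_surjective n.minFac_dvd
  have hcard : (Set.range (fiberSubgroup φ)).ncard = n.minFac := by
    rw [ncard_range_fiberSubgroup hφ, Nat.card_zmod]
  have hdom : IsDomSet (Set.range (fiberSubgroup φ)) := isDomSet_range_fiberSubgroup hn hφ
    fun _ => castHom_eq_zero_of_prime_addOrderOf (Nat.minFac_prime hn) n.minFac_dvd hsq
  exact hdom.domNumber_eq hcard fun _ hE => hE.minFac_le_ncard hn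

theorem domNumber_dihedralGroup_of_not_sq_dvd (hn : n ≠ 1) (hsq : ¬ n.minFac ^ 2 ∣ n) :
    domNumber (DihedralGroup n) = n.minFac + 1 := by
  have : Fact n.minFac.Prime := ⟨Nat.minFac_prime hn⟩
  let φ : ZMod n →+ ZMod n.minFac := ZMod.castHom n.minFac_dvd (ZMod n.minFac)
  have hφ : Function.Surjective φ := ZMod.castHom_surjective n.minFac_dvd
  have hcard : (insert (zpowers (r 1)) (Set.range (fiberSubgroup φ))).ncard = n.minFac + 1 := by
    rw [Set.ncard_insert_of_notMem (zpowers_r_notMem_range_fiberSubgroup hφ 1),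
      ncard_range_fiberSubgroup hφ, Nat.card_zmod]
  have hdom := isDomSet_insert_zpowers_range_fiberSubgroup hn hφ
  exact hdom.domNumber_eq hcard fun _ hE => hE.minFac_lt_ncard hn hsq

end DomNumber

/-- For `n ≥ 2` and `p` the smallest prime dividing `n`, the domination number
of the dihedral group of order `2n` is `p` if `p²` divides `n`, and `p + 1`
otherwise. -/
theorem dihedral_domNumber (n : ℕ) (hn : 2 ≤ n) (p : ℕ) (hp : p.Prime)
    (hdvd : p ∣ n) (hmin : ∀ q : ℕ, q.Prime → q ∣ n → p ≤ q) :
    domNumber (DihedralGroup n) = if p ^ 2 ∣ n then p else p + 1 := by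
  have : NeZero n := ⟨by lia⟩
  have hn1 : n ≠ 1 := by lia
  obtain rfl : n.minFac = p := le_antisymm (Nat.minFac_le_of_dvd hp.two_le hdvd)
    (hmin _ (Nat.minFac_prime hn1) n.minFac_dvd)
  split_ifs with hsq
  · exact domNumber_dihedralGroup_of_sq_dvd hn1 hsq
  · exact domNumber_dihedralGroup_of_not_sq_dvd hn1 hsq
end

section
/- Let G be a finite supersolvable group having at least one proper non-trivial subgroup. Then there exists a prime divisor p of |G| such that γ(G) ≤ p + 1. -/
/-- A group `G` is supersolvable if it has a normal series
`1 = s 0 ⊴ s 1 ⊴ ⋯ ⊴ s k = G` in which every term is normal in `G` and every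
factor is cyclic. -/
def IsSupersolvableGroup (G : Type*) [Group G] : Prop :=
  ∃ (k : ℕ) (s : Fin (k + 1) → Subgroup G),
    s 0 = ⊥ ∧ s (Fin.last k) = ⊤ ∧
    (∀ i : Fin k, s i.castSucc ≤ s i.succ) ∧
    (∀ i : Fin (k + 1), (s i).Normal) ∧
    (∀ i : Fin k, ∃ _h : ((s i.castSucc).subgroupOf (s i.succ)).Normal,
      IsCyclic ((s i.succ) ⧸ (s i.castSucc).subgroupOf (s i.succ))) 

/-!
Take normal subgroups `M < N < G` of `G` with `M` of prime index `q` in `N` and `N` of prime index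
in `G`. The proper subgroups of `G` strictly above `M` dominate the intersection graph: a
non-trivial `K` meets `K ⊔ M` if that is proper, and otherwise `K` meets `N`, because Dedekind's law
gives `N = (K ⊓ N) ⊔ M`. Apart from `N` these subgroups are complements of `N` modulo `M`, and each
is determined by the coset of `M` in which it meets a fixed coset `gN` generating `G ⧸ N`; hence
there are at most `q + 1` of them.
-/

section DedekindLaw

variable {G : Type*} [Group G] {A B C : Subgroup G}

theorem sup_inf_assoc_of_le_of_normal_left [A.Normal] (h : A ≤ C) :
    (A ⊔ B) ⊓ C = A ⊔ B ⊓ C := by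
  apply SetLike.coe_injective
  rw [Subgroup.coe_inf, Subgroup.normal_mul, Subgroup.normal_mul, Subgroup.mul_inf_assoc A B C h]

theorem sup_inf_assoc_of_le_of_normal_right [B.Normal] (h : A ≤ C) :
    (A ⊔ B) ⊓ C = A ⊔ B ⊓ C := by
  refine le_antisymm ?_ (le_inf (sup_le_sup_left inf_le_left A) (sup_le h inf_le_right))
  rw [← SetLike.coe_subset_coe, Subgroup.coe_inf, Subgroup.mul_normal,
    ← Subgroup.mul_inf_assoc A B C h]
  exact Subgroup.sup_eq_closure_mul A (B ⊓ C) ▸ Subgroup.subset_closure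

end DedekindLaw

section DominatingSets

variable {G : Type*} [Group G]

theorem IsDomSet.domNumber_le {D : Set (Subgroup G)} (hD : IsDomSet D) : domNumber G ≤ D.ncard :=
  Nat.sInf_le ⟨D, hD, rfl⟩

theorem isDomSet_of_forall_exists_inf_ne_bot {D : Set (Subgroup G)}
    (hD : ∀ H ∈ D, H ≠ ⊥ ∧ H ≠ ⊤)
    (hmeet : ∀ K : Subgroup G, K ≠ ⊥ → K ≠ ⊤ → ∃ W ∈ D, K ⊓ W ≠ ⊥) : IsDomSet D := by
  refine ⟨hD, fun K hbot htop => ?_⟩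
  obtain ⟨W, hW, hKW⟩ := hmeet K hbot htop
  by_cases h : W = K
  · exact .inl (h ▸ hW)
  · exact .inr ⟨W, hW, h, hKW⟩

theorem inf_ne_bot_of_sup_eq_top_of_lt {K M N : Subgroup G} [M.Normal] (hsup : M ⊔ K = ⊤)
    (hMN : M < N) : K ⊓ N ≠ ⊥ := by
  intro hbot
  have hN : N = M ⊔ K ⊓ N := by
    rw [← sup_inf_assoc_of_le_of_normal_left hMN.le, hsup, top_inf_eq]
  exact hMN.ne' (by rwa [hbot, sup_bot_eq] at hN)

theorem isDomSet_Ioo_top {M N : Subgroup G} [M.Normal] (hMN : M < N) (hN : N < ⊤) :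
    IsDomSet (Set.Ioo M ⊤) := by
  refine isDomSet_of_forall_exists_inf_ne_bot
    (fun H hH => ⟨(bot_le.trans_lt hH.1).ne', hH.2.ne⟩) fun K hbot _ => ?_
  by_cases hKM : K ≤ M
  · exact ⟨N, ⟨hMN, hN⟩, by rwa [inf_eq_left.2 (hKM.trans hMN.le)]⟩
  by_cases hsup : M ⊔ K = ⊤
  · exact ⟨N, ⟨hMN, hN⟩, inf_ne_bot_of_sup_eq_top_of_lt hsup hMN⟩
  · exact ⟨M ⊔ K, ⟨left_lt_sup.2 hKM, lt_top_iff_ne_top.2 hsup⟩,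
      by rwa [inf_eq_left.2 le_sup_right]⟩

end DominatingSets

section ComplementsOver

/-- The complements of `b` in the interval `[a, ⊤]` of a lattice: the elements `c` with
`c ⊓ b = a` and `c ⊔ b = ⊤`. They are what remains to be counted in `Set.Ioo a ⊤` when
`a ⋖ b ⋖ ⊤`. -/
def complementsOver {α : Type*} [Lattice α] [OrderTop α] (a b : α) : Set α :=
  {c | c ⊓ b = a ∧ c ⊔ b = ⊤}

theorem Ioo_top_subset_insert_complementsOver {α : Type*} [Lattice α] [OrderTop α] {a b : α}
    (hab : a ⋖ b) (hb : b ⋖ ⊤) : Set.Ioo a ⊤ ⊆ insert b (complementsOver a b) := by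
  rintro c ⟨hac, hc⟩
  rcases hab.eq_or_eq (le_inf hac.le hab.le) inf_le_right with hinf | hinf
  · rcases hb.eq_or_eq le_sup_right le_top with hsup | hsup
    · exact absurd ((inf_eq_left.2 (sup_eq_right.1 hsup)).symm.trans hinf) hac.ne'
    · exact .inr ⟨hinf, hsup⟩
  · exact .inl ((hb.eq_or_eq (inf_eq_right.1 hinf) le_top).resolve_right hc.ne)

variable {G : Type*} [Group G] {M N : Subgroup G} [N.Normal]

theorem exists_mul_mem_of_mem_complementsOver {W : Subgroup G} (hW : W ∈ complementsOver M N)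
    (g : G) : ∃ n : N, g * n ∈ W := by
  have hg : g ∈ W ⊔ N := hW.2 ▸ Subgroup.mem_top g
  obtain ⟨w, hw, n, hn, rfl⟩ := Subgroup.mem_sup_of_normal_right.1 hg
  exact ⟨⟨n⁻¹, N.inv_mem hn⟩, by simpa only [mul_inv_cancel_right] using hw⟩

theorem zpowers_sup_eq_top {g : G} (hg : Subgroup.zpowers (g : G ⧸ N) = ⊤) :
    Subgroup.zpowers g ⊔ N = ⊤ := by
  have hmap : (Subgroup.zpowers g).map (QuotientGroup.mk' N) = ⊤ := by
    rw [MonoidHom.map_zpowers]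
    exact hg
  have hcomap := Subgroup.comap_map_eq (QuotientGroup.mk' N) (Subgroup.zpowers g)
  rwa [hmap, Subgroup.comap_top, QuotientGroup.ker_mk', eq_comm] at hcomap

theorem eq_sup_zpowers_of_mem_complementsOver {W : Subgroup G} (hW : W ∈ complementsOver M N)
    {g : G} (hg : Subgroup.zpowers (g : G ⧸ N) = ⊤) (hgW : g ∈ W) :
    W = M ⊔ Subgroup.zpowers g := by
  obtain ⟨hinf, -⟩ := hW
  have hle : Subgroup.zpowers g ≤ W := Subgroup.zpowers_le.2 hgW
  calc
    W = (Subgroup.zpowers g ⊔ N) ⊓ W := by rw [zpowers_sup_eq_top hg, top_inf_eq]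
    _ = Subgroup.zpowers g ⊔ N ⊓ W := sup_inf_assoc_of_le_of_normal_right hle
    _ = M ⊔ Subgroup.zpowers g := by rw [inf_comm, hinf, sup_comm]

theorem encard_complementsOver_le [IsCyclic (G ⧸ N)] :
    (complementsOver M N).encard ≤ ENat.card (N ⧸ M.subgroupOf N) := by
  obtain ⟨γ, hγ⟩ := isCyclic_iff_exists_zpowers_eq_top.1 ‹IsCyclic (G ⧸ N)›
  obtain ⟨g, rfl⟩ := QuotientGroup.mk_surjective γ
  let generated (c : N ⧸ M.subgroupOf N) : Subgroup G := M ⊔ Subgroup.zpowers (g * (c.out : N))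
  suffices h : complementsOver M N ⊆ Set.range generated by
    calc
      (complementsOver M N).encard ≤ (generated '' Set.univ).encard :=
        Set.encard_le_encard (Set.image_univ ▸ h)
      _ ≤ ENat.card (N ⧸ M.subgroupOf N) := Set.encard_univ _ ▸ Set.encard_image_le _ _
  intro W hW
  obtain ⟨n, hn⟩ := exists_mul_mem_of_mem_complementsOver hW g
  let c : N ⧸ M.subgroupOf N := n
  have hMW : M ≤ W := hW.1 ▸ inf_le_left
  have hout : (n : G)⁻¹ * (c.out : N) ∈ M :=
    Subgroup.mem_subgroupOf.1 (QuotientGroup.eq.1 (QuotientGroup.out_eq' c).symm)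
  have hmem : g * (c.out : N) ∈ W := by
    simpa only [mul_assoc, mul_inv_cancel_left] using W.mul_mem hn (hMW hout)
  have hgen : Subgroup.zpowers ((g * (c.out : N) : G) : G ⧸ N) = ⊤ := by
    rwa [QuotientGroup.mk_mul_of_mem g c.out.2]
  exact ⟨c, (eq_sup_zpowers_of_mem_complementsOver hW hgen hmem).symm⟩

end ComplementsOver

section PrimeIndex

variable {G : Type*} [Group G] {M N : Subgroup G}

theorem covBy_of_relIndex_prime (hMN : M ≤ N) (hp : (M.relIndex N).Prime) : M ⋖ N := by
  have hne : ¬ N ≤ M := fun h => hp.ne_one (Subgroup.relIndex_eq_one.2 h)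
  refine ⟨lt_of_le_not_ge hMN hne, fun X hMX hXN => ?_⟩
  rw [← Subgroup.relIndex_mul_relIndex M X N hMX.le hXN.le] at hp
  rcases Nat.prime_mul_iff.1 hp with ⟨-, h⟩ | ⟨-, h⟩
  · exact hXN.not_ge (Subgroup.relIndex_eq_one.1 h)
  · exact hMX.not_ge (Subgroup.relIndex_eq_one.1 h)

theorem encard_Ioo_top_le_relIndex_add_one [N.Normal] (hMN : M ≤ N) (hq : (M.relIndex N).Prime)
    (hp : N.index.Prime) : (Set.Ioo M ⊤).encard ≤ M.relIndex N + 1 := by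
  have hcyc : IsCyclic (G ⧸ N) := by
    have := Fact.mk hp
    exact isCyclic_of_prime_card (Subgroup.index_eq_card N).symm
  have hfin : Finite (N ⧸ M.subgroupOf N) :=
    Nat.finite_of_card_ne_zero hq.ne_zero
  have hcard : ENat.card (N ⧸ M.subgroupOf N) = M.relIndex N := ENat.card_eq_coe_natCard _
  have hN : N ⋖ ⊤ := covBy_of_relIndex_prime le_top (N.relIndex_top_right.symm ▸ hp)
  calc
    (Set.Ioo M ⊤).encard ≤ (insert N (complementsOver M N)).encard :=
      Set.encard_le_encard
        (Ioo_top_subset_insert_complementsOver (covBy_of_relIndex_prime hMN hq) hN)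
    _ ≤ (complementsOver M N).encard + 1 := Set.encard_insert_le _ _
    _ ≤ M.relIndex N + 1 := by
      gcongr
      exact hcard ▸ encard_complementsOver_le

end PrimeIndex

section CyclicNormal

theorem index_zpowers_pow_eq_of_prime {C : Type*} [CommGroup C] {g : C}
    (hg : Subgroup.zpowers g = ⊤) {p : ℕ} (hp : p.Prime) (hdvd : p ∣ orderOf g) :
    (Subgroup.zpowers (g ^ p)).index = p := by
  have := Fact.mk hp
  have hne : (g : C ⧸ Subgroup.zpowers (g ^ p)) ≠ 1 := by
    rw [Ne, QuotientGroup.eq_one_iff]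
    rintro ⟨k, hk⟩
    have hone : g ^ ((p : ℤ) * k - 1) = 1 := by
      rw [zpow_sub_one, zpow_mul, zpow_natCast]
      exact mul_inv_eq_one.2 hk
    have hdvd' : (p : ℤ) ∣ p * k - 1 :=
      (Int.natCast_dvd_natCast.2 hdvd).trans (orderOf_dvd_iff_zpow_eq_one.2 hone)
    exact (Nat.prime_iff_prime_int.1 hp).not_dvd_one ((dvd_sub_right (dvd_mul_right _ _)).1 hdvd')
  have hpow : (g : C ⧸ Subgroup.zpowers (g ^ p)) ^ p = 1 :=
    (QuotientGroup.eq_one_iff _).2 (Subgroup.mem_zpowers _)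
  have hgen : ∀ x, x ∈ Subgroup.zpowers (g : C ⧸ Subgroup.zpowers (g ^ p)) := by
    intro x
    obtain ⟨y, rfl⟩ := QuotientGroup.mk_surjective x
    obtain ⟨k, rfl⟩ := Subgroup.mem_zpowers_iff.1 (hg ▸ Subgroup.mem_top y)
    exact ⟨k, rfl⟩
  rw [Subgroup.index_eq_card, ← orderOf_eq_card_of_forall_mem_zpowers hgen,
    orderOf_eq_prime hpow hne]

theorem exists_index_prime_of_isCyclic (C : Type*) [Group C] [IsCyclic C] [Nontrivial C] :
    ∃ K : Subgroup C, K.index.Prime := by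
  let _ : CommGroup C := IsCyclic.commGroup
  obtain ⟨g, hg⟩ := isCyclic_iff_exists_zpowers_eq_top.1 ‹IsCyclic C›
  have hg1 : g ≠ 1 := by
    rintro rfl
    exact bot_ne_top (Subgroup.zpowers_one_eq_bot.symm.trans hg)
  obtain ⟨p, hp, hdvd⟩ := Nat.exists_prime_and_dvd (mt orderOf_eq_one_iff.1 hg1)
  exact ⟨Subgroup.zpowers (g ^ p), (index_zpowers_pow_eq_of_prime hg hp hdvd).symm ▸ hp⟩

variable {G : Type*} [Group G]

theorem normal_of_le_of_isCyclic_normal {H C : Subgroup G} [C.Normal] [IsCyclic C] (h : H ≤ C) :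
    H.Normal := by
  refine ⟨fun x hx g => ?_⟩
  obtain ⟨m, hm⟩ := MonoidHom.map_cyclic (MulAut.conjNormal (H := C) g).toMonoidHom
  have hconj : g * x * g⁻¹ = x ^ m := congrArg Subtype.val (hm ⟨x, h hx⟩)
  exact hconj ▸ H.zpow_mem hx m

theorem exists_normal_relIndex_prime_of_isCyclic (C : Subgroup G) [C.Normal] [IsCyclic C]
    (hC : C ≠ ⊥) : ∃ M : Subgroup G, M.Normal ∧ (M.relIndex C).Prime := by
  have := C.nontrivial_iff_ne_bot.2 hC
  obtain ⟨K, hK⟩ := exists_index_prime_of_isCyclic C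
  refine ⟨K.map C.subtype, normal_of_le_of_isCyclic_normal (Subgroup.map_subtype_le K), ?_⟩
  rwa [Subgroup.relIndex, Subgroup.subgroupOf,
    Subgroup.comap_map_eq_self_of_injective C.subtype_injective]

end CyclicNormal

section Supersolvable

variable {G : Type*} [Group G]

theorem isCyclic_map_mk'_of_isCyclic_quotient {S T : Subgroup G} [S.Normal]
    [IsCyclic (T ⧸ S.subgroupOf T)] : IsCyclic (T.map (QuotientGroup.mk' S)) := by
  refine isCyclic_of_surjective
    (QuotientGroup.lift (S.subgroupOf T) ((QuotientGroup.mk' S).subgroupMap T) ?_)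
    (QuotientGroup.lift_surjective_of_surjective _ _
      ((QuotientGroup.mk' S).subgroupMap_surjective T) _)
  exact fun t ht => Subtype.ext ((QuotientGroup.eq_one_iff _).2 ht)

theorem IsSupersolvableGroup.exists_normal_isCyclic_map_mk' (hG : IsSupersolvableGroup G)
    {N : Subgroup G} (hN : N ≠ ⊥) :
    ∃ (S : Subgroup G) (_ : S.Normal), ¬ N ≤ S ∧ IsCyclic (N.map (QuotientGroup.mk' S)) := by
  obtain ⟨k, s, hbot, htop, -, hnormal, hcyclic⟩ := hG
  obtain ⟨i, hle, hnle⟩ : ∃ i : Fin k, N ≤ s i.succ ∧ ¬ N ≤ s i.castSucc := by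
    by_contra! hstep
    have hnle : ∀ i, ¬ N ≤ s i :=
      Fin.induction (by rwa [hbot, le_bot_iff]) fun i ih h => ih (hstep i h)
    exact hnle (Fin.last k) (htop ▸ le_top)
  have := hnormal i.castSucc
  obtain ⟨_, hfactor⟩ := hcyclic i
  have := isCyclic_map_mk'_of_isCyclic_quotient (S := s i.castSucc) (T := s i.succ)
  exact ⟨s i.castSucc, hnormal _, hnle, Subgroup.isCyclic_of_le (Subgroup.map_mono hle)⟩

theorem IsSupersolvableGroup.exists_normal_le_relIndex_prime (hG : IsSupersolvableGroup G)
    (N : Subgroup G) [hNormal : N.Normal] (hN : N ≠ ⊥) :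
    ∃ M : Subgroup G, M.Normal ∧ M ≤ N ∧ (M.relIndex N).Prime := by
  obtain ⟨S, hS, hNS, hcyc⟩ := hG.exists_normal_isCyclic_map_mk' hN
  let π := QuotientGroup.mk' S
  have hmap : N.map π ≠ ⊥ := by
    rwa [Ne, Subgroup.map_eq_bot_iff, QuotientGroup.ker_mk']
  have := hNormal.map π (QuotientGroup.mk'_surjective S)
  obtain ⟨L, hL, hprime⟩ := exists_normal_relIndex_prime_of_isCyclic (N.map π) hmap
  refine ⟨L.comap π ⊓ N, inferInstance, inf_le_right, ?_⟩
  rwa [Subgroup.inf_relIndex_right, Subgroup.relIndex_comap]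

end Supersolvable

/-- The divisor is taken of a finite index, and the bound is on `Set.encard`, because `Nat.card G`
is the junk value `0` when `G` is infinite, as is `Set.ncard` of an infinite dominating set. -/
theorem supersolvable_domNumber_le_general {G : Type*} [Group G] (hss : IsSupersolvableGroup G)
    (hG : ∃ K : Subgroup G, K ≠ ⊥ ∧ K ≠ ⊤) :
    ∃ p : ℕ, p.Prime ∧ (∃ H : Subgroup G, H.FiniteIndex ∧ p ∣ H.index) ∧
      ∃ D : Set (Subgroup G), IsDomSet D ∧ D.encard ≤ p + 1 := by
  obtain ⟨K, hKbot, hKtop⟩ := hG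
  have htop : (⊤ : Subgroup G) ≠ ⊥ := fun h => hKbot (le_bot_iff.1 (h ▸ le_top))
  obtain ⟨N, hN, -, hp⟩ := hss.exists_normal_le_relIndex_prime ⊤ htop
  have hNtop : N ⋖ ⊤ := covBy_of_relIndex_prime le_top hp
  have hNbot : N ≠ ⊥ := by
    rintro rfl
    exact (hNtop.eq_or_eq bot_le le_top).elim hKbot hKtop
  obtain ⟨M, hM, hMN, hq⟩ := hss.exists_normal_le_relIndex_prime N hNbot
  rw [Subgroup.relIndex_top_right] at hp
  have hindex : M.index ≠ 0 :=
    Subgroup.relIndex_mul_index hMN ▸ mul_ne_zero hq.ne_zero hp.ne_zero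
  exact ⟨M.relIndex N, hq, ⟨M, ⟨hindex⟩, Subgroup.relIndex_dvd_index_of_le hMN⟩, Set.Ioo M ⊤,
    isDomSet_Ioo_top (covBy_of_relIndex_prime hMN hq).lt hNtop.lt,
    encard_Ioo_top_le_relIndex_add_one hMN hq hp⟩

/-- A finite supersolvable group with a proper non-trivial subgroup has
domination number at most `p + 1` for some prime divisor `p` of its order. -/
theorem supersolvable_domNumber_le {G : Type*} [Group G] [Finite G]
    (hss : IsSupersolvableGroup G)
    (hG : ∃ K : Subgroup G, K ≠ ⊥ ∧ K ≠ ⊤) :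
    ∃ p : ℕ, p.Prime ∧ p ∣ Nat.card G ∧ domNumber G ≤ p + 1 := by
  obtain ⟨p, hp, ⟨H, -, hdvd⟩, D, hD, hcard⟩ := supersolvable_domNumber_le_general hss hG
  exact ⟨p, hp, hdvd.trans H.index_dvd_card,
    hD.domNumber_le.trans (Set.encard_le_coe_iff_finite_ncard_le.1 hcard).2⟩
end

section
/- For every n, the intersection graph Γ(S_n) of the symmetric group S_n has no dominating set of cardinality 1, and the intersection graph Γ(A_n) of the alternating group A_n has no dominating set of cardinality 1; that is, neither S_n nor A_n possesses a proper non-trivial subgroup intersecting every proper non-trivial subgroup non-trivially. -/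
/-!
A subgroup meeting every proper non-trivial subgroup non-trivially contains every minimal subgroup,
hence every element of prime order. The symmetric group is generated by transpositions, of order 2,
and the alternating group by 3-cycles, of order 3, so in both cases such a subgroup is everything.
-/

open Subgroup

theorem atom_le_of_forall_inf_ne_bot {L : Type*} [SemilatticeInf L] [BoundedOrder L] {h a : L}
    (h_ne_bot : h ≠ ⊥) (h_inf : ∀ k : L, k ≠ ⊥ → k ≠ ⊤ → h ⊓ k ≠ ⊥) (ha : IsAtom a) :
    a ≤ h := by
  have inf_ne_bot : h ⊓ a ≠ ⊥ := by
    obtain rfl | ha_ne_top := eq_or_ne a ⊤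
    · rwa [inf_top_eq]
    · exact h_inf a ha.ne_bot ha_ne_top
  exact ha.not_disjoint_iff_le.mp fun hd ↦ inf_ne_bot hd.symm.eq_bot

section Group

variable {G : Type*} [Group G]

theorem isAtom_zpowers_of_prime_orderOf {g : G} (hg : (orderOf g).Prime) :
    IsAtom (zpowers g) := by
  have : Fact (Nat.card (zpowers g)).Prime := ⟨(Nat.card_zpowers g).symm ▸ hg⟩
  refine ⟨fun h_bot ↦ ?_, fun K hK ↦ ?_⟩
  · rw [zpowers_eq_bot, ← orderOf_eq_one_iff] at h_bot
    exact hg.ne_one h_bot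
  · obtain h_bot | h_top := (K.subgroupOf (zpowers g)).eq_bot_or_eq_top_of_prime_card
    · exact (subgroupOf_eq_bot.mp h_bot).eq_bot_of_le hK.le
    · exact absurd (subgroupOf_eq_top.mp h_top) hK.not_ge

theorem not_exists_forall_inf_ne_bot_of_closure_eq_top_of_prime_orderOf {S : Set G}
    (hS : closure S = ⊤) (prime_orderOf : ∀ g ∈ S, (orderOf g).Prime) :
    ¬∃ H : Subgroup G, H ≠ ⊥ ∧ H ≠ ⊤ ∧ ∀ K : Subgroup G, K ≠ ⊥ → K ≠ ⊤ → H ⊓ K ≠ ⊥ := by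
  rintro ⟨H, h_ne_bot, h_ne_top, h_inf⟩
  have subset : S ⊆ H := fun g hg ↦
    zpowers_le.mp <| atom_le_of_forall_inf_ne_bot h_ne_bot h_inf <|
      isAtom_zpowers_of_prime_orderOf (prime_orderOf g hg)
  exact h_ne_top (top_le_iff.mp (hS ▸ (closure_le H).mpr subset))

end Group

theorem symmetric_alternating_not_dominated_by_singleton_general
    (α : Type*) [Fintype α] [DecidableEq α] :
    (¬∃ H : Subgroup (Equiv.Perm α), H ≠ ⊥ ∧ H ≠ ⊤ ∧
        ∀ K : Subgroup (Equiv.Perm α), K ≠ ⊥ → K ≠ ⊤ → H ⊓ K ≠ ⊥) ∧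
    (¬∃ H : Subgroup (alternatingGroup α), H ≠ ⊥ ∧ H ≠ ⊤ ∧
        ∀ K : Subgroup (alternatingGroup α), K ≠ ⊥ → K ≠ ⊤ → H ⊓ K ≠ ⊥) := by
  constructor
  · refine not_exists_forall_inf_ne_bot_of_closure_eq_top_of_prime_orderOf
      Equiv.Perm.closure_isSwap ?_
    intro σ (hσ : σ.IsSwap)
    exact hσ.orderOf ▸ Nat.prime_two
  · refine not_exists_forall_inf_ne_bot_of_closure_eq_top_of_prime_orderOf
      alternatingGroup.closure_isThreeCycles_eq_top ?_
    intro σ (hσ : (σ : Equiv.Perm α).IsThreeCycle)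
    have orderOf_eq : orderOf σ = 3 := (orderOf_coe σ).symm.trans hσ.orderOf
    exact orderOf_eq ▸ Nat.prime_three

/-- For every `n`, neither the symmetric group `S_n` nor the alternating group
`A_n` possesses a proper non-trivial subgroup intersecting every proper
non-trivial subgroup non-trivially; i.e. neither `Γ(S_n)` nor `Γ(A_n)` has a
dominating set of cardinality one. -/
theorem symmetric_alternating_not_dominated_by_singleton (n : ℕ) :
    (¬∃ H : Subgroup (Equiv.Perm (Fin n)), H ≠ ⊥ ∧ H ≠ ⊤ ∧
        ∀ K : Subgroup (Equiv.Perm (Fin n)), K ≠ ⊥ → K ≠ ⊤ → H ⊓ K ≠ ⊥) ∧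
    (¬∃ H : Subgroup (alternatingGroup (Fin n)), H ≠ ⊥ ∧ H ≠ ⊤ ∧
        ∀ K : Subgroup (alternatingGroup (Fin n)), K ≠ ⊥ → K ≠ ⊤ → H ⊓ K ≠ ⊥) :=
  symmetric_alternating_not_dominated_by_singleton_general (Fin n)
end
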